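/- Let Q be a stationary ergodic probability measure on Ω = {1,...,D}^ℤ and let k ≥ 0. Then Q-almost surely lim_{n→∞} [ B(X_{n+1}|X_1^n, k) − Q(X_{n+1} | X_{n+1−k}^{n}) ] = 0, where Q(X_{n+1}|X_{n+1−k}^{n}) denotes the ratio Q(X_{n+1−k}^{n+1})/Q(X_{n+1−k}^{n}) of cylinder probabilities evaluated at the sample path (which is Q-almost surely well defined). -/

import Mathlib

open Filter MeasureTheory
open scoped Topology

/-- Number of occurrences `c(w|z)` of `w` as a substring of `z`. -/
def cnt {D : ℕ} (w z : List (Fin D)) : ℕ :=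
  ((List.range (z.length - w.length + 1)).filter
    (fun i => (z.drop i).take w.length = w)).length

/-- Count `c(w | z_1^{m-1})` of `w` in the string `z` with its last symbol removed,
with the convention that counting in a block of length `-1` (i.e. when `z` itself is
empty) gives `0`. -/
def cntPred {D : ℕ} (w z : List (Fin D)) : ℕ :=
  if z = [] then 0 else cnt w z.dropLast

/-- The prefix `x_1^n` of the one-sided sequence `x` (0-indexed: `x i = x_{i+1}`). -/
def pref {D : ℕ} (x : ℕ → Fin D) (n : ℕ) : List (Fin D) :=
  (List.range n).map x

/-- Adaptive Markov predictor: the natural-number index corresponds to the Markov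
order shifted by one, so `Bpred D xs a (k+1) = B(a | xs, k)` and
`Bpred D xs a 0 = B(a | xs, -1) = 1/D`, where
`B(x_{n+1}|x_1^n, k) = (c(x_{n+1-k}^{n+1}|x_1^n) + B(x_{n+1}|x_1^n, k-1)) /
(c(x_{n+1-k}^{n}|x_1^{n-1}) + 1)`.  Counts of substrings whose indices fall outside
the string are taken to be zero. -/
noncomputable def Bpred (D : ℕ) (xs : List (Fin D)) (a : Fin D) : ℕ → ℝ
  | 0 => 1 / D
  | k + 1 =>
    if k ≤ xs.length then
      ((cnt (xs.drop (xs.length - k) ++ [a]) xs : ℝ) + Bpred D xs a k) /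
      ((cntPred (xs.drop (xs.length - k)) xs : ℝ) + 1)
    else Bpred D xs a k

/-- The two-sided sequence space `Ω = {1,...,D}^ℤ` with the product σ-algebra. -/
abbrev Omega (D : ℕ) := ℤ → Fin D

/-- The shift `T : Ω → Ω`. -/
def shiftT (D : ℕ) : Omega D → Omega D := fun ω i => ω (i + 1)

/-- The cylinder set `{X_1 = x 0, ..., X_n = x (n-1)}`. -/
def cylSet (D : ℕ) (x : ℕ → Fin D) (n : ℕ) : Set (Omega D) :=
  {ω | ∀ i < n, ω ((i : ℤ) + 1) = x i}

/-- The one-sided sample path `X_1, X_2, ...` of `ω` (0-indexed). -/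
def path (D : ℕ) (ω : Omega D) : ℕ → Fin D := fun i => ω ((i : ℤ) + 1)

/-- The cylinder probability `Q(x_1^n)`. -/
noncomputable def Qstr (D : ℕ) (Q : Measure (Omega D)) (x : ℕ → Fin D) (n : ℕ) : ℝ :=
  (Q (cylSet D x n)).toReal


noncomputable def maxS {Ω : Type*} (T : Ω → Ω) (f : Ω → ℝ) : ℕ → Ω → ℝ
  | 0 => fun _ => 0
  | n + 1 => fun x => max 0 (f x + maxS T f n (T x))

lemma maxS_nonneg {Ω : Type*} (T : Ω → Ω) (f : Ω → ℝ) (n : ℕ) (x : Ω) : 0 ≤ maxS T f n x := by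
  cases n with
  | zero => simp [maxS]
  | succ n => simp [maxS]

lemma maxS_mono {Ω : Type*} (T : Ω → Ω) (f : Ω → ℝ) (x : Ω) :
    Monotone (fun n => maxS T f n x) := by
  apply monotone_nat_of_le_succ
  intro n
  induction n generalizing x with
  | zero => exact maxS_nonneg T f 1 x
  | succ n ih =>
    have := ih (T x)
    show max 0 (f x + maxS T f n (T x)) ≤ max 0 (f x + maxS T f (n+1) (T x))
    gcongr

lemma maxS_le {Ω : Type*} (T : Ω → Ω) (f : Ω → ℝ) (K : ℝ) (hK : ∀ x, |f x| ≤ K) (n : ℕ) (x : Ω) :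
    maxS T f n x ≤ n * K := by
  induction n generalizing x with
  | zero => simp [maxS]
  | succ n ih =>
    have h1 := ih (T x)
    have h2 := abs_le.1 (hK x)
    have h3 : 0 ≤ K := (abs_nonneg _).trans (hK x)
    have h4 := maxS_nonneg T f n (T x)
    show max 0 (f x + maxS T f n (T x)) ≤ _
    push_cast
    apply max_le <;> nlinarith

lemma maxS_meas {Ω : Type*} [MeasurableSpace Ω] {T : Ω → Ω} {f : Ω → ℝ} (hT : Measurable T)
    (hf : Measurable f) (n : ℕ) : Measurable (maxS T f n) := by
  induction n with
  | zero => exact measurable_const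
  | succ n ih =>
    exact measurable_const.max (hf.add (ih.comp hT))

lemma birk_le_maxS {Ω : Type*} (T : Ω → Ω) (f : Ω → ℝ) (n : ℕ) (x : Ω) :
    birkhoffSum T f n x ≤ maxS T f n x := by
  induction n generalizing x with
  | zero => simp [maxS]
  | succ n ih =>
    rw [birkhoffSum_succ']
    have := ih (T x)
    exact (by linarith : _ ≤ f x + maxS T f n (T x)).trans (le_max_right _ _)

lemma maxS_bdd_iff {Ω : Type*} (T : Ω → Ω) (f : Ω → ℝ) (x : Ω) :
    BddAbove (Set.range fun n => maxS T f n (T x)) ↔ BddAbove (Set.range fun n => maxS T f n x) := by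
  constructor
  · rintro ⟨B, hB⟩
    refine ⟨max 0 (f x + B), ?_⟩
    rintro _ ⟨n, rfl⟩
    cases n with
    | zero => simp [maxS]
    | succ n =>
      have := hB ⟨n, rfl⟩
      simp only at this
      show max 0 (f x + maxS T f n (T x)) ≤ _
      gcongr
  · rintro ⟨B, hB⟩
    refine ⟨B - f x, ?_⟩
    rintro _ ⟨n, rfl⟩
    have : maxS T f (n+1) x ≤ B := hB ⟨n+1, rfl⟩
    have h2 : f x + maxS T f n (T x) ≤ maxS T f (n+1) x := le_max_right _ _
    simp only
    linarith

lemma sup_bdd {Ω : Type*} [MeasurableSpace Ω] {μ : Measure Ω} [IsProbabilityMeasure μ]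
    {T : Ω → Ω} (hT : Ergodic T μ) {f : Ω → ℝ} (hf : Measurable f) {K : ℝ}
    (hK : ∀ x, |f x| ≤ K) (hneg : ∫ x, f x ∂μ < 0) :
    ∀ᵐ x ∂μ, BddAbove (Set.range fun n => birkhoffSum T f n x) := by
  have hm := fun n => maxS_meas hT.measurable hf n
  have hA : MeasurableSet {x | BddAbove (Set.range fun n => maxS T f n x)} :=
    measurableSet_bddAbove_range hm
  have hinv : T ⁻¹' {x | BddAbove (Set.range fun n => maxS T f n x)} =
      {x | BddAbove (Set.range fun n => maxS T f n x)} := by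
    ext x; exact maxS_bdd_iff T f x
  rcases hT.toPreErgodic.ae_mem_or_ae_notMem hA hinv with h | h
  · filter_upwards [h] with x ⟨B, hB⟩
    refine ⟨B, ?_⟩
    rintro _ ⟨n, rfl⟩
    exact (birk_le_maxS T f n x).trans (hB ⟨n, rfl⟩)
  · exfalso
    have hint : ∀ n, Integrable (maxS T f n) μ := fun n => by
      refine Integrable.of_bound (hm n).aestronglyMeasurable (n * K) (Eventually.of_forall fun x => ?_)
      rw [Real.norm_eq_abs, abs_of_nonneg (maxS_nonneg _ _ _ _)]
      exact maxS_le T f K hK n x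
    have hge : ∀ n, 0 ≤ ∫ x, (maxS T f (n+1) x - maxS T f n (T x)) ∂μ := by
      intro n
      have hc : Integrable (fun x => maxS T f n (T x)) μ :=
        hT.toMeasurePreserving.integrable_comp_of_integrable (hint n)
      have e : ∫ x, maxS T f n (T x) ∂μ = ∫ x, maxS T f n x ∂μ := by
        have := integral_map (μ := μ) hT.measurable.aemeasurable (f := maxS T f n)
          (hm n).aestronglyMeasurable
        rw [hT.map_eq] at this
        exact this.symm
      rw [integral_sub (hint _) hc, e, sub_nonneg]
      exact integral_mono (hint _) (hint _) fun x => maxS_mono T f x n.le_succ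
    have hlim : Tendsto (fun n => ∫ x, (maxS T f (n+1) x - maxS T f n (T x)) ∂μ) atTop
        (𝓝 (∫ x, f x ∂μ)) := by
      refine tendsto_integral_of_dominated_convergence (fun _ => K)
        (fun n => ((hm _).sub ((hm _).comp hT.measurable)).aestronglyMeasurable)
        (integrable_const _) (fun n => Eventually.of_forall fun x => ?_) ?_
      · have h2 := abs_le.1 (hK x)
        have h4 := maxS_nonneg T f n (T x)
        have h3 : 0 ≤ K := (abs_nonneg _).trans (hK x)
        show |max 0 (f x + maxS T f n (T x)) - _| ≤ K
        rw [abs_le]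
        constructor
        · linarith [le_max_right 0 (f x + maxS T f n (T x))]
        · have : max 0 (f x + maxS T f n (T x)) ≤ K + maxS T f n (T x) :=
            max_le (by linarith) (by linarith)
          linarith
      · filter_upwards [h] with x hx
        have hx' : ¬ BddAbove (Set.range fun n => maxS T f n (T x)) :=
          fun hb => hx ((maxS_bdd_iff T f x).1 hb)
        have ht := tendsto_atTop_atTop_of_monotone' (maxS_mono T f (T x)) hx'
        refine tendsto_const_nhds.congr' ?_
        filter_upwards [ht.eventually_ge_atTop (-f x)] with n hn
        show f x = max 0 (f x + maxS T f n (T x)) - _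
        rw [max_eq_right (by linarith)]; ring
    exact absurd (ge_of_tendsto' hlim hge) (not_le.2 hneg)

lemma birk_upper {Ω : Type*} [MeasurableSpace Ω] {μ : Measure Ω} [IsProbabilityMeasure μ]
    {T : Ω → Ω} (hT : Ergodic T μ) {f : Ω → ℝ} (hf : Measurable f) {K : ℝ}
    (hK : ∀ x, |f x| ≤ K) :
    ∀ᵐ x ∂μ, ∀ ε > 0, ∀ᶠ n : ℕ in atTop, birkhoffSum T f n x / n < ∫ x, f x ∂μ + ε := by
  have hi : Integrable f μ := Integrable.of_bound hf.aestronglyMeasurable K (Eventually.of_forall hK)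
  have key : ∀ m : ℕ, ∀ᵐ x ∂μ, BddAbove (Set.range fun n =>
      birkhoffSum T (fun x => f x - (∫ x, f x ∂μ + 1/((m:ℝ)+1))) n x) := by
    intro m
    refine sup_bdd hT (hf.sub_const _) (K := K + |∫ x, f x ∂μ + 1/((m:ℝ)+1)|) (fun x => ?_) ?_
    · exact (abs_sub _ _).trans (by linarith [hK x])
    · rw [integral_sub hi (integrable_const _)]
      simp
      positivity
  filter_upwards [ae_all_iff.2 key] with x hx ε hε
  obtain ⟨m, hm⟩ := exists_nat_one_div_lt (half_pos hε)
  obtain ⟨B, hB⟩ := hx m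
  have hB' : Tendsto (fun n : ℕ => B / (n:ℝ)) atTop (𝓝 0) := tendsto_const_div_atTop_nhds_zero_nat B
  filter_upwards [hB'.eventually_lt_const (half_pos hε), eventually_gt_atTop 0] with n h1 h2
  have h3 := hB ⟨n, rfl⟩
  simp only [birkhoffSum, Finset.sum_sub_distrib, Finset.sum_const, Finset.card_range, nsmul_eq_mul] at h3
  have h2' : (0:ℝ) < n := by exact_mod_cast h2
  rw [div_lt_iff₀ h2'] at h1 ⊢
  simp only [birkhoffSum]
  nlinarith

lemma birk_tendsto {Ω : Type*} [MeasurableSpace Ω] {μ : Measure Ω} [IsProbabilityMeasure μ]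
    {T : Ω → Ω} (hT : Ergodic T μ) {f : Ω → ℝ} (hf : Measurable f) {K : ℝ}
    (hK : ∀ x, |f x| ≤ K) :
    ∀ᵐ x ∂μ, Tendsto (fun n : ℕ => birkhoffSum T f n x / n) atTop (𝓝 (∫ x, f x ∂μ)) := by
  filter_upwards [birk_upper hT hf hK, birk_upper hT hf.neg (K := K) (by simpa using hK)] with x h1 h2
  rw [Metric.tendsto_nhds]
  intro ε hε
  filter_upwards [h1 ε hε, h2 ε hε] with n a b
  simp only [birkhoffSum, Pi.neg_apply, Finset.sum_neg_distrib, integral_neg, neg_div] at a b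
  rw [Real.dist_eq, abs_lt]
  simp only [birkhoffSum]
  constructor <;> linarith

lemma pref_drop {D : ℕ} (x : ℕ → Fin D) (n k : ℕ) (h : k ≤ n) :
    (pref x n).drop (n - k) = pref (fun i => x (n - k + i)) k := by
  apply List.ext_getElem
  · simp [pref]; omega
  · intro i h1 h2; simp [pref]

lemma pref_succ {D : ℕ} (x : ℕ → Fin D) (n : ℕ) : pref x (n+1) = pref x n ++ [x n] := by
  simp [pref, List.range_succ]

lemma cnt_pref {D : ℕ} (x y : ℕ → Fin D) (n m : ℕ) (h : m ≤ n) :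
    (cnt (pref y m) (pref x n)) =
      ∑ i ∈ Finset.range (n - m + 1), if ∀ j < m, x (i + j) = y j then 1 else 0 := by
  have e : ∀ i ∈ List.range (n - m + 1),
      decide (((pref x n).drop i).take m = pref y m) = decide (∀ j < m, x (i + j) = y j) := by
    intro i hi
    rw [List.mem_range] at hi
    rw [decide_eq_decide]
    have hl : (((pref x n).drop i).take m).length = m := by simp [pref]; omega
    constructor
    · intro he j hj
      have h2 := List.getElem_of_eq he (i := j) (by omega)
      simpa [pref] using h2
    · intro he
      apply List.ext_getElem
      · simp [pref]; omega
      · intro j h1 h2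
        simpa [pref] using he j (by omega)
  rw [← Finset.card_filter]
  unfold cnt
  have l1 : (pref x n).length = n := by simp [pref]
  have l2 : (pref y m).length = m := by simp [pref]
  rw [l1, l2, List.filter_congr e]
  rfl

lemma shift_iter (D : ℕ) (ω : Omega D) (n : ℕ) (i : ℤ) : ((shiftT D)^[n] ω) i = ω (i + n) := by
  induction n generalizing ω with
  | zero => simp
  | succ n ih =>
    rw [Function.iterate_succ_apply, ih]; simp only [shiftT]; push_cast; congr 1; ring

lemma cyl_iter (D : ℕ) (ω : Omega D) (y : ℕ → Fin D) (m n : ℕ) :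
    (shiftT D)^[n] ω ∈ cylSet D y m ↔ ∀ j < m, path D ω (n + j) = y j := by
  simp only [cylSet, Set.mem_setOf_eq, shift_iter, path]
  refine forall₂_congr fun j _ => ?_
  push_cast
  rw [show (j:ℤ) + 1 + n = n + j + 1 by ring]

lemma cyl_meas (D : ℕ) (y : ℕ → Fin D) (m : ℕ) : MeasurableSet (cylSet D y m) := by
  have : cylSet D y m = ⋂ i, ⋂ (_ : i < m), (fun ω : Omega D => ω ((i:ℤ)+1)) ⁻¹' {y i} := by
    ext; simp [cylSet]
  rw [this]
  exact MeasurableSet.iInter fun i => MeasurableSet.iInter fun _ =>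
    measurable_pi_apply _ (MeasurableSet.singleton _)

lemma cnt_birk (D : ℕ) (ω : Omega D) (y : ℕ → Fin D) (m n : ℕ) (h : m ≤ n) :
    (cnt (pref y m) (pref (path D ω) n) : ℝ) =
      birkhoffSum (shiftT D) ((cylSet D y m).indicator 1) (n - m + 1) ω := by
  classical
  rw [cnt_pref _ _ _ _ h, birkhoffSum]
  push_cast
  refine Finset.sum_congr rfl fun i _ => ?_
  rw [Set.indicator_apply]
  simp only [cyl_iter, Pi.one_apply]

lemma Bpred_succ (D : ℕ) (ω : Omega D) (k n : ℕ) (h : k + 1 ≤ n) (y : ℕ → Fin D)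
    (hy : ∀ j < k + 1, path D ω (n - k + j) = y j) :
    Bpred D (pref (path D ω) n) (path D ω n) (k + 1) =
      (birkhoffSum (shiftT D) ((cylSet D y (k+1)).indicator 1) (n - k) ω +
        Bpred D (pref (path D ω) n) (path D ω n) k) /
      (birkhoffSum (shiftT D) ((cylSet D y k).indicator 1) (n - k) ω + 1) := by
  have l1 : (pref (path D ω) n).length = n := by simp [pref]
  have hne : pref (path D ω) n ≠ [] := by
    intro h0; rw [h0] at l1; simp at l1; omega
  have e1 : (pref (path D ω) n).drop (n - k) = pref y k := by
    rw [pref_drop _ _ _ (by omega)]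
    unfold pref
    refine List.map_congr_left fun i hi => hy i ?_
    rw [List.mem_range] at hi; omega
  have e2 : (pref (path D ω) n).drop (n - k) ++ [path D ω n] = pref y (k+1) := by
    rw [e1, pref_succ, ← hy k (by omega), Nat.sub_add_cancel (by omega)]
  have e3 : (pref (path D ω) n).dropLast = pref (path D ω) (n-1) := by
    obtain ⟨n, rfl⟩ : ∃ n', n = n' + 1 := ⟨n-1, by omega⟩
    rw [pref_succ]; simp
  rw [Bpred, l1, if_pos (by omega), e2, e1, cntPred, if_neg hne, e3, cnt_birk _ _ _ _ _ h,
    cnt_birk _ _ _ _ _ (by omega), show n - (k+1) + 1 = n - k by omega,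
    show n - 1 - k + 1 = n - k by omega]

lemma birk_nonneg (D : ℕ) (ω : Omega D) (C : Set (Omega D)) (n : ℕ) :
    0 ≤ birkhoffSum (shiftT D) (C.indicator (1 : Omega D → ℝ)) n ω :=
  Finset.sum_nonneg fun _ _ => Set.indicator_nonneg (fun _ _ => zero_le_one) _

lemma Bpred_mem (D : ℕ) (ω : Omega D) (k n : ℕ) (h : k ≤ n) :
    0 ≤ Bpred D (pref (path D ω) n) (path D ω n) k ∧
    Bpred D (pref (path D ω) n) (path D ω n) k ≤ 1 := by
  induction k with
  | zero =>
    simp only [Bpred, one_div]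
    exact ⟨by positivity, Nat.cast_inv_le_one D⟩
  | succ k ih =>
    obtain ⟨h0, h1⟩ := ih (by omega)
    rw [Bpred_succ D ω k n h (fun j => path D ω (n - k + j)) (fun _ _ => rfl)]
    have a := birk_nonneg D ω (cylSet D (fun j => path D ω (n - k + j)) k) (n - k)
    have b := birk_nonneg D ω (cylSet D (fun j => path D ω (n - k + j)) (k+1)) (n - k)
    refine ⟨by positivity, ?_⟩
    rw [div_le_one (by positivity)]
    gcongr
    refine Finset.sum_le_sum fun i _ => ?_
    refine Set.indicator_le_indicator_of_subset ?_ (fun _ => zero_le_one) _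
    intro ω' h' i hi
    exact h' i (by omega)

lemma cyl_congr (D : ℕ) (y z : ℕ → Fin D) (m : ℕ) (h : ∀ j < m, y j = z j) :
    cylSet D y m = cylSet D z m := by
  ext ω
  simp only [cylSet, Set.mem_setOf_eq]
  refine forall₂_congr fun j hj => ?_
  rw [h j hj]

lemma word_case (D : ℕ) (Q : Measure (Omega D)) [IsProbabilityMeasure Q]
    (hQ : Ergodic (shiftT D) Q) (k : ℕ) (y : ℕ → Fin D) :
    ∀ᵐ ω ∂Q, ∀ ε > 0, ∀ᶠ n in atTop, (∀ j < k + 1, path D ω (n - k + j) = y j) →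
      |Bpred D (pref (path D ω) n) (path D ω n) (k + 1) - Qstr D Q y (k+1) / Qstr D Q y k| < ε := by
  have B : ∀ m, ∀ᵐ ω ∂Q, Tendsto (fun n : ℕ =>
      birkhoffSum (shiftT D) ((cylSet D y m).indicator (1 : Omega D → ℝ)) n ω / n) atTop
      (𝓝 (Qstr D Q y m)) := by
    intro m
    have := birk_tendsto hQ (f := (cylSet D y m).indicator 1)
      (measurable_one.indicator (cyl_meas D y m)) (K := 1) (fun x => by
        by_cases hx : x ∈ cylSet D y m <;> simp [hx])
    rwa [integral_indicator_one (cyl_meas D y m)] at this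
  by_cases h0 : Q (cylSet D y k) = 0
  · have : ∀ᵐ ω ∂Q, ∀ n : ℕ, (shiftT D)^[n] ω ∉ cylSet D y k := by
      refine ae_all_iff.2 fun n => ?_
      exact (hQ.toMeasurePreserving.iterate n).quasiMeasurePreserving.ae
        (measure_eq_zero_iff_ae_notMem.1 h0)
    filter_upwards [this] with ω hω ε hε
    refine Eventually.of_forall fun n hn => ?_
    exact absurd ((cyl_iter D ω y k (n-k)).2 fun j hj => hn j (by omega)) (hω (n - k))
  · have hp : Qstr D Q y k ≠ 0 := ENNReal.toReal_ne_zero.2 ⟨h0, measure_ne_top _ _⟩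
    filter_upwards [B k, B (k+1)] with ω h1 h2 ε hε
    have hN : Tendsto (fun n => n - k) atTop atTop := tendsto_sub_atTop_nat k
    have h3 := h1.comp hN
    have h4 := h2.comp hN
    have hinv : Tendsto (fun n : ℕ => 1 / ((n - k : ℕ) : ℝ)) atTop (𝓝 0) :=
      tendsto_one_div_atTop_nhds_zero_nat.comp hN
    have hb : Tendsto (fun n : ℕ => Bpred D (pref (path D ω) n) (path D ω n) k / ((n - k : ℕ) : ℝ))
        atTop (𝓝 0) := by
      refine tendsto_of_tendsto_of_tendsto_of_le_of_le' tendsto_const_nhds hinv ?_ ?_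
      · filter_upwards [eventually_ge_atTop k] with n hn
        exact div_nonneg (Bpred_mem D ω k n hn).1 (Nat.cast_nonneg _)
      · filter_upwards [eventually_ge_atTop k] with n hn
        gcongr
        exact (Bpred_mem D ω k n hn).2
    have hl := (h4.add hb).div (h3.add hinv) (by simpa using hp)
    rw [add_zero, add_zero] at hl
    filter_upwards [(Metric.tendsto_nhds.1 hl) ε hε, eventually_ge_atTop (k+1)] with n ha hn hy
    rw [Bpred_succ D ω k n hn y hy]
    rw [Real.dist_eq] at ha
    have hpos : ((n - k : ℕ) : ℝ) ≠ 0 := by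
      have : n - k ≠ 0 := by omega
      exact_mod_cast this
    convert ha using 3
    simp only [Function.comp, Pi.div_apply]
    rw [← add_div, ← add_div, div_div_div_cancel_right₀ hpos]

/-- Let `Q` be a stationary ergodic probability measure on `Ω = {1,...,D}^ℤ` and
`k ≥ 0`. Then `Q`-almost surely
`lim_{n→∞} [ B(X_{n+1}|X_1^n, k) − Q(X_{n+1} | X_{n+1−k}^{n}) ] = 0`, where
`Q(X_{n+1}|X_{n+1−k}^{n}) = Q(X_{n+1−k}^{n+1})/Q(X_{n+1−k}^{n})` is a ratio of
cylinder probabilities (identified, via stationarity, with cylinder probabilities of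
the corresponding strings) evaluated at the sample path. -/
theorem predictor_converges_to_conditional_probability
    (D : ℕ) (hD : 2 ≤ D)
    (Q : Measure (Omega D)) [IsProbabilityMeasure Q]
    (hQerg : Ergodic (shiftT D) Q) (k : ℕ) :
    ∀ᵐ ω ∂Q,
      Tendsto (fun n : ℕ =>
          Bpred D (pref (path D ω) n) (path D ω n) (k + 1) -
            Qstr D Q (fun i => path D ω (n - k + i)) (k + 1) /
              Qstr D Q (fun i => path D ω (n - k + i)) k)
        atTop (𝓝 0) := by
  have key := ae_all_iff.2 fun w : Fin (k+1) → Fin D =>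
    word_case D Q hQerg k (fun i => w (Fin.ofNat (k+1) i))
  filter_upwards [key] with ω hω
  rw [Metric.tendsto_nhds]
  intro ε hε
  filter_upwards [eventually_all.2 fun w => hω w ε hε] with n hn
  have h := hn (fun i => path D ω (n - k + i))
  have hy : ∀ j < k + 1, path D ω (n - k + j) =
      path D ω (n - k + ((Fin.ofNat (k+1) j : Fin (k+1)) : ℕ)) := by
    intro j hj
    simp [Fin.ofNat, Nat.mod_eq_of_lt hj]
  have h' := h hy
  rw [Real.dist_eq, sub_zero]
  unfold Qstr at h' ⊢
  rw [cyl_congr D (fun i => path D ω (n - k + i)) _ (k+1) hy,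
    cyl_congr D (fun i => path D ω (n - k + i)) _ k (fun j hj => hy j (by omega))]
  exact h'
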